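/- Let (A, m, k) be a regular local ring of dimension d and let M be a nonzero finitely generated A-module of finite length (i.e., supported only at the maximal ideal). Then Tor_d^A(M, k) ≠ 0. -/

import Mathlib

open CategoryTheory Limits

namespace TorAux
open HomologicalComplex

universe u
variable {A : Type u} [CommRing A]

theorem mk_exact {X Y Z : ModuleCat.{u} A} {f : X ⟶ Y} {g : Y ⟶ Z} (w : f ≫ g = 0)
    (h : ∀ y : Y, g y = 0 → ∃ x : X, f x = y) : (ShortComplex.mk f g w).Exact :=
  (ShortComplex.moduleCat_exact_iff _).2 h

theorem of_exact {X Y Z : ModuleCat.{u} A} {f : X ⟶ Y} {g : Y ⟶ Z} {w : f ≫ g = 0}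
    (h : (ShortComplex.mk f g w).Exact) (y : Y) (hy : g y = 0) : ∃ x : X, f x = y :=
  (ShortComplex.moduleCat_exact_iff _).1 h y hy

theorem comp_app {X Y Z : ModuleCat.{u} A} {f : X ⟶ Y} {g : Y ⟶ Z} {h : X ⟶ Z}
    (e : f ≫ g = h) (x : X) : g (f x) = h x := by subst e; rfl

variable {K L : ChainComplex (ModuleCat.{u} A) ℕ} (φ : K ⟶ L)


theorem rel_succ (n : ℕ) : (ComplexShape.down ℕ).Rel (n+1) n := rfl

/-- mapping cone -/
noncomputable def Cn : ChainComplex (ModuleCat.{u} A) ℕ := homotopyCofiber φ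
/-- first projection -/
noncomputable def cfst (n : ℕ) : (Cn φ).X (n+1) ⟶ K.X n :=
  homotopyCofiber.fstX φ (n+1) n (rel_succ n)
/-- second projection -/
noncomputable def csnd (n : ℕ) : (Cn φ).X n ⟶ L.X n := homotopyCofiber.sndX φ n
/-- first inclusion -/
noncomputable def cinl (n : ℕ) : K.X n ⟶ (Cn φ).X (n+1) :=
  homotopyCofiber.inlX φ n (n+1) (rel_succ n)
/-- second inclusion -/
noncomputable def cinr (n : ℕ) : L.X n ⟶ (Cn φ).X n := homotopyCofiber.inrX φ n

theorem cinl_cfst (n : ℕ) : cinl φ n ≫ cfst φ n = 𝟙 _ := homotopyCofiber.inlX_fstX φ _ _ _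
theorem cinl_csnd (n : ℕ) : cinl φ n ≫ csnd φ (n+1) = 0 := homotopyCofiber.inlX_sndX φ _ _ _
theorem cinr_cfst (n : ℕ) : cinr φ (n+1) ≫ cfst φ n = 0 := homotopyCofiber.inrX_fstX φ _ _ _
theorem cinr_csnd (n : ℕ) : cinr φ n ≫ csnd φ n = 𝟙 _ := homotopyCofiber.inrX_sndX φ _
theorem d_cfst (n : ℕ) : (Cn φ).d (n+2) (n+1) ≫ cfst φ n = -(cfst φ (n+1) ≫ K.d (n+1) n) :=
  homotopyCofiber.d_fstX φ (n+2) (n+1) n (rel_succ _) (rel_succ _)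
theorem d_csnd (n : ℕ) : (Cn φ).d (n+1) n ≫ csnd φ n =
    cfst φ n ≫ φ.f n + csnd φ (n+1) ≫ L.d (n+1) n :=
  homotopyCofiber.d_sndX φ (n+1) n (rel_succ _)
theorem id_eq (n : ℕ) : cfst φ n ≫ cinl φ n + csnd φ (n+1) ≫ cinr φ (n+1) = 𝟙 _ := by
  apply homotopyCofiber.ext_to_X φ (n+1) n (rel_succ n)
  · change (cfst φ n ≫ cinl φ n + csnd φ (n+1) ≫ cinr φ (n+1)) ≫ cfst φ n = 𝟙 _ ≫ cfst φ n
    simp [cinl_cfst, cinr_cfst]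
  · change (cfst φ n ≫ cinl φ n + csnd φ (n+1) ≫ cinr φ (n+1)) ≫ csnd φ (n+1) = 𝟙 _ ≫ csnd φ (n+1)
    simp [cinl_csnd, cinr_csnd]
theorem id_eq0 : csnd φ 0 ≫ cinr φ 0 = 𝟙 _ := by
  apply homotopyCofiber.ext_to_X' φ 0 (by simp)
  change (csnd φ 0 ≫ cinr φ 0) ≫ csnd φ 0 = 𝟙 _ ≫ csnd φ 0
  simp [cinr_csnd]

theorem cone_ext (n : ℕ) (x y : (Cn φ).X (n+1)) (h1 : cfst φ n x = cfst φ n y)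
    (h2 : csnd φ (n+1) x = csnd φ (n+1) y) : x = y := by
  have hx := ConcreteCategory.congr_hom (id_eq φ n) x
  have hy := ConcreteCategory.congr_hom (id_eq φ n) y
  simp only [ModuleCat.hom_add, ModuleCat.hom_comp, LinearMap.add_apply, LinearMap.comp_apply,
    ModuleCat.hom_id, LinearMap.id_apply] at hx hy
  change cinl φ n (cfst φ n x) + cinr φ (n+1) (csnd φ (n+1) x) = x at hx
  change cinl φ n (cfst φ n y) + cinr φ (n+1) (csnd φ (n+1) y) = y at hy
  rw [← hx, ← hy, h1, h2]

theorem cone_ext0 (x y : (Cn φ).X 0) (h2 : csnd φ 0 x = csnd φ 0 y) : x = y := by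
  have hx := comp_app (id_eq0 φ) x
  have hy := comp_app (id_eq0 φ) y
  rw [h2, hy] at hx
  exact hx.symm

theorem cone_mk (n : ℕ) (p : K.X n) (q : L.X (n+1)) : ∃ c : (Cn φ).X (n+1),
    cfst φ n c = p ∧ csnd φ (n+1) c = q := by
  refine ⟨cinl φ n p + cinr φ (n+1) q, ?_, ?_⟩
  · rw [map_add, comp_app (cinl_cfst φ n), comp_app (cinr_cfst φ n)]
    simp
  · rw [map_add, comp_app (cinl_csnd φ n), comp_app (cinr_csnd φ (n+1))]
    simp

theorem cone_fst_d (n : ℕ) (c : (Cn φ).X (n+2)) :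
    cfst φ n ((Cn φ).d (n+2) (n+1) c) = - K.d (n+1) n (cfst φ (n+1) c) :=
  comp_app (d_cfst φ n) c

theorem cone_snd_d (n : ℕ) (c : (Cn φ).X (n+1)) :
    csnd φ n ((Cn φ).d (n+1) n c) = φ.f n (cfst φ n c) + L.d (n+1) n (csnd φ (n+1) c) :=
  comp_app (d_csnd φ n) c

theorem cone_lift (n : ℕ) (c : (Cn φ).X (n+1))
    (hc : (Cn φ).d (n+1) n c = 0)
    (hL : (ShortComplex.mk _ _ (L.d_comp_d (n + 2) (n + 1) n)).Exact)
    (hp : ∃ p', K.d (n+1) n p' = cfst φ n c) :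
    ∃ c', (Cn φ).d (n+2) (n+1) c' = c := by
  obtain ⟨p', hp'⟩ := hp
  have h0 := cone_snd_d φ n c
  rw [hc, map_zero, ← hp'] at h0
  have hcomm : φ.f n (K.d (n+1) n p') = L.d (n+1) n (φ.f (n+1) p') :=
    (comp_app (φ.comm (n+1) n) p').symm
  rw [hcomm, ← map_add] at h0
  obtain ⟨q', hq'⟩ := of_exact hL _ h0.symm
  obtain ⟨c', h1, h2⟩ := cone_mk φ (n+1) (-p') q'
  refine ⟨c', cone_ext φ n _ _ ?_ ?_⟩
  · rw [cone_fst_d, h1, map_neg, neg_neg, hp']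
  · rw [cone_snd_d, h1, h2, hq', map_neg]; abel

instance {X : ModuleCat.{u} A} (P : ProjectiveResolution X) (n : ℕ) : Projective (P.complex.X n) :=
  P.projective n

theorem cone_projective (hK : ∀ n, Projective (K.X n)) (hL : ∀ n, Projective (L.X n)) (n : ℕ) :
    Projective ((Cn φ).X n) := by
  cases n with
  | zero => exact Projective.of_iso (homotopyCofiber.XIso φ 0 (by simp)).symm (hL 0)
  | succ n =>
    have := hK n
    have := hL (n+1)
    exact Projective.of_iso (homotopyCofiber.XIsoBiprod φ (n+1) n rfl).symm inferInstance

theorem res_aug {X : ModuleCat.{u} A} (P : ProjectiveResolution X) :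
    ∃ π : P.complex.X 0 ⟶ X, Function.Surjective π ∧ ∃ w : P.complex.d 1 0 ≫ π = 0,
      (ShortComplex.mk _ _ w).Exact :=
  ⟨P.π.f 0, (ModuleCat.epi_iff_surjective (P.π.f 0)).1 inferInstance, P.complex_d_comp_π_f_zero, P.exact₀⟩

/-- mapping cone resolution -/
theorem coneRes {X Y : ModuleCat.{u} A} (P : ProjectiveResolution X)
    (a : A) (g : X ⟶ Y) (φ : P.complex ⟶ P.complex)
    (hφ : ∀ n (p : P.complex.X n), φ.f n p = a • p) (hf : ∀ x : X, a • x = 0 → x = 0)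
    (hfg : ∀ x : X, g (a • x) = 0)
    (hex : ∀ y : X, g y = 0 → ∃ x : X, a • x = y) (hg : Function.Surjective g) :
    ∃ R : ProjectiveResolution Y, R.complex = Cn φ := by
  obtain ⟨π, hP0, hw, hP⟩ := res_aug P
  let π0 : (Cn φ).X 0 ⟶ Y := csnd φ 0 ≫ π ≫ g
  have hφ' : ∀ p : P.complex.X 0, π (φ.f 0 p) = a • π p := fun p => by
    rw [hφ 0 p, map_smul]
  have hQd : ∀ q, π (P.complex.d 1 0 q) = 0 := fun q => by
    rw [comp_app hw q]; rfl
  have w : (Cn φ).d 1 0 ≫ π0 = 0 := by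
    ext c
    change g (π (csnd φ 0 ((Cn φ).d 1 0 c))) = 0
    rw [cone_snd_d, map_add, hφ', hQd, add_zero]
    exact hfg _
  have e0 : (ShortComplex.mk ((Cn φ).d 1 0) π0 w).Exact := by
    apply mk_exact
    intro c hc
    obtain ⟨x, hx⟩ := hex _ hc
    obtain ⟨p, rfl⟩ := hP0 x
    have h0 : π (csnd φ 0 c - φ.f 0 p) = 0 := by
      rw [map_sub, hφ', hx]; exact sub_self _
    obtain ⟨q, hq⟩ := of_exact hP _ h0
    obtain ⟨c', h1, h2⟩ := cone_mk φ 0 p q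
    refine ⟨c', cone_ext0 φ _ _ ?_⟩
    rw [cone_snd_d, h1, h2, hq]; abel
  have hepi : Epi π0 := by
    rw [ModuleCat.epi_iff_surjective]
    intro y
    obtain ⟨x, rfl⟩ := hg y
    obtain ⟨q, rfl⟩ := hP0 x
    exact ⟨cinr φ 0 q, by
      change g (π (csnd φ 0 (cinr φ 0 q))) = _
      rw [comp_app (cinr_csnd φ 0)]; rfl⟩
  have e1 : ∀ n, (Cn φ).ExactAt (n+1) := by
    intro n
    rw [HomologicalComplex.exactAt_iff' _ (n + 1 + 1) (n + 1) n (by simp) (by simp)]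
    apply mk_exact
    intro c hc
    apply cone_lift φ n c hc (P.exact_succ n)
    cases n with
    | zero =>
      apply of_exact hP
      apply hf
      rw [← hφ']
      have := cone_snd_d φ 0 c
      have hc' : (Cn φ).d 1 0 c = 0 := hc
      rw [hc', map_zero] at this
      have := congrArg (π) this.symm
      rw [map_add, hQd, add_zero, map_zero] at this
      exact this
    | succ n =>
      apply of_exact (P.exact_succ n)
      have := cone_fst_d φ n c
      have hc' : (Cn φ).d (n+2) (n+1) c = 0 := hc
      rw [hc', map_zero] at this
      exact neg_eq_zero.1 this.symm
  refine ⟨{ complex := Cn φ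
            projective := cone_projective φ P.projective P.projective
            π := (ChainComplex.toSingle₀Equiv _ _).symm ⟨π0, w⟩
            quasiIso := ⟨fun n => ?_⟩ }, rfl⟩
  cases n with
  | zero =>
    rw [ChainComplex.quasiIsoAt₀_iff, ShortComplex.quasiIso_iff_of_zeros']
    · refine (ShortComplex.exact_and_epi_g_iff_of_iso ?_).2 ⟨e0, hepi⟩
      have e2 : π0 = ((ChainComplex.toSingle₀Equiv _ _).symm ⟨π0, w⟩ :
        Cn φ ⟶ (ChainComplex.single₀ _).obj Y).f 0 :=
        (ChainComplex.toSingle₀Equiv_symm_apply_f_zero π0 w).symm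
      refine ShortComplex.isoMk (Iso.refl _) (Iso.refl _) (Iso.refl _) ?_ ?_
      · exact (Category.id_comp _).trans (Category.comp_id _).symm
      · exact (Category.id_comp _).trans (e2.symm.trans (Category.comp_id _).symm)
    all_goals rfl
  | succ n =>
    rw [quasiIsoAt_iff_exactAt']
    · exact e1 n
    · apply ChainComplex.exactAt_succ_single_obj

theorem cinl_d0 (φ : K ⟶ L) : cinl φ 0 ≫ (Cn φ).d 1 0 = φ.f 0 ≫ cinr φ 0 :=
  homotopyCofiber.inlX_d' φ 1 0 (rel_succ _) (by simp)
theorem cinl_dsucc (φ : K ⟶ L) (n : ℕ) : cinl φ (n+1) ≫ (Cn φ).d (n+2) (n+1) =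
    -(K.d (n+1) n ≫ cinl φ n) + φ.f (n+1) ≫ cinr φ (n+1) :=
  (homotopyCofiber.inlX_d φ (n+2) (n+1) n (rel_succ _) (rel_succ _)).trans
    rfl
theorem cinr_d (φ : K ⟶ L) (i j : ℕ) : cinr φ i ≫ (Cn φ).d i j = L.d i j ≫ cinr φ j :=
  homotopyCofiber.inrX_d φ i j

theorem map_comp_app (F : ModuleCat.{u} A ⥤ ModuleCat.{u} A) {X Y Z : ModuleCat.{u} A}
    (f : X ⟶ Y) (g : Y ⟶ Z) (x : F.obj X) : F.map (f ≫ g) x = F.map g (F.map f x) := by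
  rw [F.map_comp]; rfl

theorem cone_cycle (F : ModuleCat.{u} A ⥤ ModuleCat.{u} A) [F.Additive] (φ : K ⟶ L) (n : ℕ)
    (hex : ∀ c : F.obj ((Cn φ).X (n+1)), F.map ((Cn φ).d (n+1) n) c = 0 →
      ∃ b, F.map ((Cn φ).d (n+2) (n+1)) b = c)
    (z : F.obj (K.X n)) (hz : ∀ m, F.map (K.d n m) z = 0) (w : F.obj (L.X (n+1)))
    (hw : F.map (φ.f n) z = F.map (L.d (n+1) n) w) :
    ∃ b, F.map (K.d (n+1) n) b = z := by
  have key : F.map ((Cn φ).d (n+1) n) (F.map (cinl φ n) z) =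
      F.map (cinr φ n) (F.map (φ.f n) z) := by
    rw [← map_comp_app, ← map_comp_app]
    cases n with
    | zero => rw [cinl_d0]
    | succ n =>
      rw [cinl_dsucc, F.map_add, F.map_neg]
      change - F.map (K.d (n+1) n ≫ cinl φ n) z + F.map (φ.f (n+1) ≫ cinr φ (n+1)) z = _
      rw [map_comp_app F (K.d (n+1) n), hz, map_zero, neg_zero, zero_add]
  obtain ⟨b, hb⟩ := hex (F.map (cinl φ n) z - F.map (cinr φ (n+1)) w) (by
    rw [map_sub, key, hw, ← map_comp_app F (cinr φ (n+1)), cinr_d, map_comp_app, sub_self])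
  refine ⟨- F.map (cfst φ (n+1)) b, ?_⟩
  have h := congrArg (F.map (cfst φ n)) hb
  rw [map_sub, ← map_comp_app, ← map_comp_app, ← map_comp_app, cinl_cfst, cinr_cfst, d_cfst,
    F.map_neg, F.map_id, F.map_zero] at h
  change - F.map (cfst φ (n+1) ≫ K.d (n+1) n) b = z - 0 at h
  rw [map_neg, ← map_comp_app, h, sub_zero]

theorem isZero_step (F : ModuleCat.{u} A ⥤ ModuleCat.{u} A) [F.Additive] (a : A) (N : ℕ)
    (hF : ∀ (X : ModuleCat.{u} A) (x : F.obj X), F.map (a • 𝟙 X) x = a • x)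
    (hN : ∀ (X : ModuleCat.{u} A) (x : F.obj X), a ^ N • x = 0)
    {X Y : ModuleCat.{u} A} (g : X ⟶ Y) (hf : ∀ x : X, a • x = 0 → x = 0)
    (hfg : ∀ x : X, g (a • x) = 0)
    (hex : ∀ y : X, g y = 0 → ∃ x : X, a • x = y) (hg : Function.Surjective g) (n : ℕ)
    (hY : IsZero ((F.leftDerived (n+1)).obj Y)) : IsZero ((F.leftDerived n).obj X) := by
  let P := projectiveResolution X
  let φ : P.complex ⟶ P.complex := a • 𝟙 _
  have hφ : ∀ n, φ.f n = a • 𝟙 _ := fun n => rfl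
  obtain ⟨R, hR⟩ := coneRes P a g φ (fun n p => by rw [hφ]; rfl) hf hfg hex hg
  have h1 := hY.of_iso (R.isoLeftDerivedObj F (n+1)).symm
  refine IsZero.of_iso ?_ (P.isoLeftDerivedObj F n)
  change IsZero (HomologicalComplex.homology _ _) at h1
  change IsZero (HomologicalComplex.homology _ _)
  rw [← HomologicalComplex.exactAt_iff_isZero_homology, hR,
    HomologicalComplex.exactAt_iff' _ (n + 2) (n + 1) n (by simp) (by simp)] at h1
  have h2 : ∀ c : F.obj ((Cn φ).X (n+1)), F.map ((Cn φ).d (n+1) n) c = 0 →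
      ∃ b, F.map ((Cn φ).d (n+2) (n+1)) b = c := (ShortComplex.moduleCat_exact_iff _).1 h1
  have h3 : ∀ k (z : F.obj (P.complex.X n)), (∀ m, F.map (P.complex.d n m) z = 0) →
      a ^ k • z = 0 → ∃ b, F.map (P.complex.d (n+1) n) b = z := by
    intro k
    induction k with
    | zero => intro z _ h; exact ⟨0, by rw [map_zero]; simpa using h.symm⟩
    | succ k ih =>
      intro z hz h
      obtain ⟨w, hw⟩ := ih (a • z) (fun m => by rw [map_smul, hz, smul_zero])
        (by rw [smul_smul, ← pow_succ, h])
      refine cone_cycle F φ n h2 z hz w ?_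
      rw [hw, hφ, hF]
  rw [← HomologicalComplex.exactAt_iff_isZero_homology]
  cases n with
  | zero =>
    rw [HomologicalComplex.exactAt_iff' _ 1 0 0 (by simp) (by simp)]
    refine (ShortComplex.moduleCat_exact_iff _).2 fun z hz => h3 N z (fun m => ?_) (hN _ _)
    rw [P.complex.shape _ _ (by simp), F.map_zero]; rfl
  | succ n =>
    rw [HomologicalComplex.exactAt_iff' _ (n+2) (n+1) n (by simp) (by simp)]
    refine (ShortComplex.moduleCat_exact_iff _).2 fun z hz => h3 N z (fun m => ?_) (hN _ _)
    by_cases hm : m = n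
    · subst hm; exact hz
    · rw [P.complex.shape _ _ (by simpa using hm), F.map_zero]; rfl

theorem tor_step (M : ModuleCat.{u} A) (a : A) (N : ℕ) (hM : ∀ x : M, a ^ N • x = 0)
    {X Y : ModuleCat.{u} A} (g : X ⟶ Y) (hf : ∀ x : X, a • x = 0 → x = 0)
    (hfg : ∀ x : X, g (a • x) = 0)
    (hex : ∀ y : X, g y = 0 → ∃ x : X, a • x = y) (hg : Function.Surjective g) (n : ℕ)
    (hY : IsZero (((Tor (ModuleCat A) (n+1)).obj M).obj Y)) :
    IsZero (((Tor (ModuleCat A) n).obj M).obj X) := by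
  refine isZero_step ((MonoidalCategory.tensoringLeft (ModuleCat A)).obj M) a N ?_ ?_
    g hf hfg hex hg n hY
  · intro X x
    have : ((MonoidalCategory.tensoringLeft (ModuleCat A)).obj M).map (a • 𝟙 X) =
      a • 𝟙 _ := by
      simp
    rw [this]; rfl
  · intro X x
    induction x using TensorProduct.induction_on with
    | zero => simp
    | tmul m x => rw [TensorProduct.smul_tmul', hM, TensorProduct.zero_tmul]
    | add x y hx hy => rw [smul_add, hx, hy, add_zero]

theorem tor_zero (M : ModuleCat.{u} A) [Nontrivial M] :
    ¬ IsZero (((Tor (ModuleCat A) 0).obj M).obj (ModuleCat.of A A)) := by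
  intro h
  have h' := h.of_iso (((MonoidalCategory.tensoringLeft (ModuleCat A)).obj M).leftDerivedZeroIsoSelf.app
    (ModuleCat.of A A)).symm
  have h2 : Subsingleton (TensorProduct A M A) := ModuleCat.subsingleton_of_isZero h'
  have := (TensorProduct.rid A M).symm.injective.subsingleton
  exact not_subsingleton M this

end TorAux

namespace TorAux
open IsLocalRing

theorem pow_kill {A : Type*} [CommRing A] [IsLocalRing A] {M : Type*} [AddCommGroup M]
    [Module A M] [IsNoetherian A M] [IsArtinian A M] (a : A) (ha : a ∈ maximalIdeal A) :
    ∃ N : ℕ, ∀ x : M, a ^ N • x = 0 := by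
  obtain ⟨n, hn⟩ := IsArtinian.range_smul_pow_stabilizes (M := M) a
  refine ⟨n, ?_⟩
  have h1 := hn (n+1) (Nat.le_succ n)
  set N := LinearMap.range (a ^ n • LinearMap.id : M →ₗ[A] M) with hN
  have hbot : N = ⊥ := by
    apply Submodule.eq_bot_of_le_smul_of_le_jacobson_bot (Ideal.span {a}) N
      (IsNoetherian.noetherian _)
    · intro y hy
      rw [h1] at hy
      obtain ⟨x, rfl⟩ := hy
      have : (a ^ (n+1) • LinearMap.id : M →ₗ[A] M) x = a • (a ^ n • LinearMap.id : M →ₗ[A] M) x := by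
        simp [pow_succ', mul_smul]
      rw [this]
      exact Submodule.smul_mem_smul (Ideal.mem_span_singleton_self a) ⟨x, rfl⟩
    · rw [jacobson_eq_maximalIdeal _ bot_ne_top, Ideal.span_singleton_le_iff_mem]
      exact ha
  intro x
  have : (a ^ n • LinearMap.id : M →ₗ[A] M) x ∈ N := ⟨x, rfl⟩
  rw [hbot] at this
  simpa using this

theorem quot_local {R : Type*} [CommRing R] [IsLocalRing R] (I : Ideal R)
    (hI : I ≤ maximalIdeal R) : IsLocalRing (R ⧸ I) := by
  have : Nontrivial (R ⧸ I) := Ideal.Quotient.nontrivial_iff.2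
    (fun h => (maximalIdeal.isMaximal R).ne_top (top_le_iff.1 (h ▸ hI)))
  exact IsLocalRing.of_surjective' (Ideal.Quotient.mk I) Ideal.Quotient.mk_surjective

theorem quot_span {R : Type*} [CommRing R] [IsLocalRing R] (I : Ideal R) [IsLocalRing (R ⧸ I)]
    (s : Set R) (hs : I ⊔ Ideal.span s = maximalIdeal R) :
    Ideal.span (Ideal.Quotient.mk I '' s) = maximalIdeal (R ⧸ I) := by
  rw [← map_maximalIdeal_of_surjective (Ideal.Quotient.mk I) Ideal.Quotient.mk_surjective,
    ← hs, Ideal.map_sup, Ideal.map_quotient_self, bot_sup_eq, Ideal.map_span]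

theorem isDomain_aux (n : ℕ) : ∀ (R : Type) [CommRing R] [IsNoetherianRing R] [IsLocalRing R]
    (s : Finset R), s.card ≤ n → Ideal.span (s : Set R) = maximalIdeal R →
    (n : WithBot ℕ∞) ≤ ringKrullDim R → IsDomain R := by
  classical
  induction n with
  | zero =>
    intro R _ _ _ s hs hspan _
    have : s = ∅ := by simpa using hs
    subst this
    have hb : maximalIdeal R = ⊥ := by rw [← hspan]; simp
    exact ((isField_iff_maximalIdeal_eq).2 hb).isDomain
  | succ n ih =>
    intro R _ _ _ s hs hspan hdim
    have hmin : maximalIdeal R ∉ minimalPrimes R := by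
      intro h
      rw [← Ideal.height_eq_zero_iff] at h
      rw [← maximalIdeal_height_eq_ringKrullDim, h] at hdim
      have : n + 1 ≤ 0 := by exact_mod_cast hdim
      omega
    have hmin' : ∀ p ∈ minimalPrimes R, ¬ maximalIdeal R ≤ p := by
      intro p hp hle
      have hpp : p.IsPrime := hp.1.1
      have := le_antisymm hle (le_maximalIdeal hpp.ne_top)
      exact hmin (this ▸ hp)
    obtain ⟨p0, hp0⟩ := (Ideal.nonempty_minimalPrimes (I := (⊥ : Ideal R)) bot_ne_top)
    have hsq : ¬ maximalIdeal R ≤ maximalIdeal R ^ 2 := by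
      intro h
      have : maximalIdeal R = ⊥ := by
        apply Submodule.eq_bot_of_le_smul_of_le_jacobson_bot (maximalIdeal R) (maximalIdeal R)
          (IsNoetherian.noetherian _)
        · rwa [smul_eq_mul, ← sq]
        · exact (jacobson_eq_maximalIdeal _ bot_ne_top).ge
      exact hmin' p0 hp0 (this ▸ bot_le)
    obtain ⟨x, hxm, hx2, hxp⟩ : ∃ x ∈ maximalIdeal R, x ∉ maximalIdeal R ^ 2 ∧
        ∀ p ∈ minimalPrimes R, x ∉ p := by
      by_contra! hcon
      have := (Ideal.subset_union_prime_finite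
        ((minimalPrimes.finite_of_isNoetherianRing R).insert (maximalIdeal R ^ 2))
        (f := id) (maximalIdeal R ^ 2) (maximalIdeal R ^ 2)
        (fun i hi h1 _ => (hi.resolve_left h1).1.1) (I := maximalIdeal R)).1 (by
          intro x hx
          by_cases h2 : x ∈ maximalIdeal R ^ 2
          · exact Set.mem_biUnion (Set.mem_insert _ _) h2
          · obtain ⟨p, hp, hxp⟩ := hcon x hx h2
            exact Set.mem_biUnion (Set.mem_insert_of_mem _ hp) hxp)
      obtain ⟨i, hi, hle⟩ := this
      rcases hi with rfl | hi
      · exact hsq hle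
      · exact hmin' i hi hle
    -- exchange
    obtain ⟨i, his, hex⟩ : ∃ i ∈ s, Ideal.span {x} ⊔ Ideal.span ((s.erase i : Finset R) : Set R)
        = maximalIdeal R := by
      have hx := hxm
      rw [← hspan, Submodule.mem_span_finset] at hx
      obtain ⟨c, -, hc⟩ := hx
      obtain ⟨i, his, hu⟩ : ∃ i ∈ s, c i ∉ maximalIdeal R := by
        by_contra! hcon
        apply hx2
        rw [← hc]
        refine Ideal.sum_mem _ fun i hi => ?_
        rw [sq, smul_eq_mul]
        exact Ideal.mul_mem_mul (hcon i hi) (hspan ▸ Ideal.subset_span hi)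
      refine ⟨i, his, le_antisymm ?_ ?_⟩
      · refine sup_le ((Ideal.span_singleton_le_iff_mem _).2 hxm) ?_
        rw [← hspan]
        exact Ideal.span_mono (by exact_mod_cast s.erase_subset i)
      · set J := Ideal.span {x} ⊔ Ideal.span ((s.erase i : Finset R) : Set R) with hJ
        have hxJ : x ∈ J := Ideal.mem_sup_left (Ideal.mem_span_singleton_self x)
        have hsJ : ∀ j ∈ s.erase i, j ∈ J := fun j hj =>
          Ideal.mem_sup_right (Ideal.subset_span hj)
        have hui : IsUnit (c i) := by simpa using hu
        have hci : c i * i ∈ J := by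
          rw [← Finset.add_sum_erase _ _ his] at hc
          have : c i * i = x - ∑ j ∈ s.erase i, c j • j := by
            rw [← hc]; simp
          rw [this]
          exact J.sub_mem hxJ (J.sum_mem fun j hj => J.mul_mem_left _ (hsJ j hj))
        have hiJ : i ∈ J := (Ideal.unit_mul_mem_iff_mem J hui).1 hci
        rw [← hspan, Ideal.span_le]
        intro j hj
        by_cases hji : j = i
        · exact hji ▸ hiJ
        · exact hsJ j (Finset.mem_erase.2 ⟨hji, hj⟩)
    have hloc := quot_local (Ideal.span {x}) ((Ideal.span_singleton_le_iff_mem _).2 hxm)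
    have hdom : IsDomain (R ⧸ Ideal.span {x}) := by
      refine ih (R ⧸ Ideal.span {x}) ((s.erase i).image (Ideal.Quotient.mk _)) ?_ ?_ ?_
      · refine Finset.card_image_le.trans ?_
        rw [Finset.card_erase_of_mem his]; omega
      · rw [Finset.coe_image]
        exact quot_span _ _ hex
      · have := Ideal.height_le_ringKrullDim_quotient_add_one hxm
        rw [maximalIdeal_height_eq_ringKrullDim] at this
        have h3 := hdim.trans this
        push_cast at h3
        exact ENat.WithBot.add_le_add_one_right_iff.1 h3
    have hprime : (Ideal.span {x}).IsPrime := (Ideal.Quotient.isDomain_iff_prime _).1 hdom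
    obtain ⟨p, hp, hpx⟩ := Ideal.exists_minimalPrimes_le (I := (⊥ : Ideal R))
      (J := Ideal.span {x}) bot_le
    have hpp : p.IsPrime := hp.1.1
    have hpb : p = ⊥ := by
      apply Submodule.eq_bot_of_le_smul_of_le_jacobson_bot (Ideal.span {x}) p
        (IsNoetherian.noetherian _)
      · intro y hy
        obtain ⟨z, rfl⟩ := Ideal.mem_span_singleton'.1 (hpx hy)
        have hz : z ∈ p := (hpp.mem_or_mem hy).resolve_right (hxp p hp)
        rw [mul_comm]
        exact Submodule.smul_mem_smul (Ideal.mem_span_singleton_self x) hz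
      · rw [jacobson_eq_maximalIdeal _ bot_ne_top, Ideal.span_singleton_le_iff_mem]
        exact hxm
    subst hpb
    exact IsDomain.of_bot_isPrime R

variable {A : Type} [CommRing A] [IsNoetherianRing A] [IsLocalRing A] {d : ℕ}
/-- The ideal generated by the first `i` elements. -/
def II (a : Fin d → A) (i : ℕ) : Ideal A := Ideal.span (a '' {j | j.1 < i})

theorem II_le (a : Fin d → A) (ha : Ideal.span (Set.range a) = maximalIdeal A) (i : ℕ) :
    II a i ≤ maximalIdeal A := by
  rw [← ha]; exact Ideal.span_mono (Set.image_subset_range _ _)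

theorem II_sup (a : Fin d → A) (ha : Ideal.span (Set.range a) = maximalIdeal A) (i : ℕ) :
    II a i ⊔ Ideal.span (a '' {j | i ≤ j.1}) = maximalIdeal A := by
  rw [II, ← ha, ← Ideal.span_union, ← Set.image_union, ← Set.image_univ]
  congr 2
  ext j
  simpa using lt_or_ge j.1 i

theorem II_succ (a : Fin d → A) (i : Fin d) :
    II a (i.1+1) = II a i.1 ⊔ Ideal.span {a i} := by
  rw [II, II, ← Ideal.span_union, ← Set.image_singleton, ← Set.image_union]
  congr 2
  ext j
  simp only [Set.mem_setOf_eq, Set.union_singleton, Set.mem_insert_iff, Fin.ext_iff]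
  omega

theorem II_dim (a : Fin d → A) (hdim : ringKrullDim A = d)
    (ha : Ideal.span (Set.range a) = maximalIdeal A) (i : ℕ) (hi : i ≤ d) :
    ((d - i : ℕ) : WithBot ℕ∞) ≤ ringKrullDim (A ⧸ II a i) := by
  classical
  let t : Finset A := (Finset.univ.filter (fun j : Fin d => j.1 < i)).image a
  have ht : (t : Set A) = a '' {j | j.1 < i} := by simp [t]
  have hc : t.card ≤ i := by
    refine Finset.card_image_le.trans ?_
    rw [Fin.card_filter_val_lt]; omega
  have h := ringKrullDim_le_ringKrullDim_quotient_add_card t (by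
    rw [ringJacobson_eq_maximalIdeal, ht]
    exact fun x hx => II_le a ha i (Ideal.subset_span hx))
  rw [ht, hdim] at h
  change _ ≤ ringKrullDim (A ⧸ II a i) + _ at h
  have h2 : ((d - i : ℕ) : WithBot ℕ∞) + i ≤ ringKrullDim (A ⧸ II a i) + i := by
    have : ((d - i : ℕ) : WithBot ℕ∞) + i = d := by
      rw [← Nat.cast_add, Nat.sub_add_cancel hi]
    rw [this]
    refine h.trans ?_
    gcongr
  exact ENat.WithBot.add_le_add_natCast_right_iff.1 h2

theorem card_le_val (i : ℕ) :
    (Finset.univ.filter (fun j : Fin d => i ≤ j.1)).card ≤ d - i := by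
  have h := Finset.card_filter_add_card_filter_not (s := (Finset.univ : Finset (Fin d)))
    (fun j : Fin d => j.1 < i)
  simp only [not_lt, Fin.card_filter_val_lt, Finset.card_univ, Fintype.card_fin] at h
  omega

theorem II_domain (a : Fin d → A) (hdim : ringKrullDim A = d)
    (ha : Ideal.span (Set.range a) = maximalIdeal A) (i : ℕ) (hi : i ≤ d) :
    IsDomain (A ⧸ II a i) := by
  classical
  have := quot_local _ (II_le a ha i)
  let t : Finset A := (Finset.univ.filter (fun j : Fin d => i ≤ j.1)).image a
  have ht : (t : Set A) = a '' {j | i ≤ j.1} := by simp [t]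
  refine isDomain_aux (d - i) _ (t.image (Ideal.Quotient.mk _)) ?_ ?_ (II_dim a hdim ha i hi)
  · refine Finset.card_image_le.trans (Finset.card_image_le.trans ?_)
    exact card_le_val _
  · rw [Finset.coe_image, ht]
    exact quot_span _ _ (II_sup a ha i)

theorem II_notMem (a : Fin d → A) (hdim : ringKrullDim A = d)
    (ha : Ideal.span (Set.range a) = maximalIdeal A) (i : Fin d) : a i ∉ II a i.1 := by
  intro hmem
  have h1 : II a (i.1+1) = II a i.1 := by
    rw [II_succ, sup_eq_left, Ideal.span_singleton_le_iff_mem]; exact hmem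
  classical
  have := quot_local _ (II_le a ha i)
  let t : Finset A := (Finset.univ.filter (fun j : Fin d => i.1 + 1 ≤ j.1)).image a
  have ht : (t : Set A) = a '' {j | i.1 + 1 ≤ j.1} := by simp [t]
  have hq := quot_span (II a i.1) (t : Set A) (by rw [ht, ← h1]; exact II_sup a ha (i.1+1))
  have h2 := ringKrullDim_le_spanFinrank_maximalIdeal (A ⧸ II a i.1)
  rw [← hq, ← Finset.coe_image] at h2
  have h3 := Submodule.spanFinrank_span_le_ncard_of_finite (R := A ⧸ II a i.1)
    (Finset.finite_toSet (t.image (Ideal.Quotient.mk (II a i.1))))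
  rw [Set.ncard_coe_finset] at h3
  have h4 : (t.image (Ideal.Quotient.mk (II a i.1))).card ≤ d - (i.1+1) := by
    refine Finset.card_image_le.trans (Finset.card_image_le.trans ?_)
    exact card_le_val _
  have h5 := (II_dim a hdim ha i.1 i.2.le).trans h2
  have h6 : d - i.1 ≤ (Submodule.span (A ⧸ II a i.1)
    ((t.image (Ideal.Quotient.mk (II a i.1)) : Finset _) : Set (A ⧸ II a i.1))).spanFinrank := by
    exact_mod_cast h5
  have := i.2
  omega

theorem tor_induct (a : Fin d → A) (hdim : ringKrullDim A = d)
    (ha : Ideal.span (Set.range a) = maximalIdeal A) (M : ModuleCat.{0} A) [Nontrivial M]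
    (hM : ∀ b ∈ maximalIdeal A, ∃ N : ℕ, ∀ x : M, b ^ N • x = 0) (i : ℕ) (hi : i ≤ d) :
    ∀ (Y : ModuleCat.{0} A) (g : A →ₗ[A] Y), Function.Surjective g → LinearMap.ker g = II a i →
      ¬ IsZero (((Tor (ModuleCat A) i).obj M).obj Y) := by
  induction i with
  | zero =>
    intro Y g hg hk h0
    have hb : II a 0 = ⊥ := by simp [II]
    rw [hb] at hk
    let e : A ≃ₗ[A] Y := LinearEquiv.ofBijective g ⟨LinearMap.ker_eq_bot.1 hk, hg⟩
    exact tor_zero M (h0.of_iso (((Tor (ModuleCat A) 0).obj M).mapIso e.toModuleIso))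
  | succ i ih =>
    intro Y g hg hk h0
    have hi' : i < d := hi
    let j : Fin d := ⟨i, hi'⟩
    have hsucc : II a (i+1) = II a i ⊔ Ideal.span {a j} := II_succ a j
    have haj : a j ∈ maximalIdeal A := ha ▸ Ideal.subset_span ⟨j, rfl⟩
    obtain ⟨N, hN⟩ := hM (a j) haj
    have hdom := II_domain a hdim ha i hi'.le
    have hnot : a j ∉ II a i := II_notMem a hdim ha j
    have hle : II a i ≤ LinearMap.ker g := by rw [hk, hsucc]; exact le_sup_left
    have hgj : g (a j) = 0 := by
      have : a j ∈ LinearMap.ker g := by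
        rw [hk, hsucc]; exact Ideal.mem_sup_right (Ideal.mem_span_singleton_self _)
      exact this
    refine ih hi'.le (ModuleCat.of A (A ⧸ II a i)) (Submodule.mkQ (II a i))
      (Submodule.mkQ_surjective _) (Submodule.ker_mkQ _) ?_
    refine tor_step M (a j) N hN (ModuleCat.ofHom (Submodule.liftQ (II a i) g hle))
      ?_ ?_ ?_ ?_ i h0
    · intro (x : A ⧸ II a i) hx
      obtain ⟨x, rfl⟩ := Ideal.Quotient.mk_surjective x
      have hx' : Ideal.Quotient.mk (II a i) (a j) * Ideal.Quotient.mk (II a i) x = 0 := hx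
      rcases mul_eq_zero.1 hx' with h | h
      · exact absurd (Ideal.Quotient.eq_zero_iff_mem.1 h) hnot
      · exact h
    · intro (x : A ⧸ II a i)
      obtain ⟨x, rfl⟩ := Submodule.mkQ_surjective _ x
      change Submodule.liftQ (II a i) g hle (Submodule.mkQ _ (a j • x)) = 0
      rw [Submodule.mkQ_apply, Submodule.liftQ_apply, smul_eq_mul, mul_comm, ← smul_eq_mul,
        map_smul, hgj, smul_zero]
    · intro (y : A ⧸ II a i) hy
      obtain ⟨y, rfl⟩ := Submodule.mkQ_surjective _ y
      have hy' : y ∈ LinearMap.ker g := hy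
      rw [hk, hsucc, Submodule.mem_sup] at hy'
      obtain ⟨u, hu, v, hv, rfl⟩ := hy'
      obtain ⟨w, rfl⟩ := Ideal.mem_span_singleton.1 hv
      refine ⟨Submodule.mkQ (II a i) w, ?_⟩
      change Submodule.mkQ (II a i) (a j • w) = _
      have hu0 : Submodule.mkQ (II a i) u = 0 := (Submodule.Quotient.mk_eq_zero (II a i)).2 hu
      rw [map_add, hu0, zero_add, smul_eq_mul]
    · intro y
      obtain ⟨x, rfl⟩ := hg y
      exact ⟨Submodule.mkQ (II a i) x, rfl⟩

end TorAux

/-- Let `(A, m, k)` be a regular local ring of Krull dimension `d` (regularity being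
expressed by the maximal ideal admitting `d` generators) and let `M` be a nonzero finitely
generated `A`-module of finite length. Then `Tor_d^A(M, k) ≠ 0`. -/
theorem tor_dim_ne_zero_of_finite_length (A : Type) [CommRing A] [IsNoetherianRing A]
    [IsLocalRing A] (d : ℕ) (hdim : ringKrullDim A = d)
    (hreg : ∃ a : Fin d → A, Ideal.span (Set.range a) = IsLocalRing.maximalIdeal A)
    (M : Type) [AddCommGroup M] [Module A M] [Module.Finite A M] [Nontrivial M]
    (hlen : IsFiniteLength A M) :
    ¬ IsZero (((Tor (ModuleCat A) d).obj (ModuleCat.of A M)).obj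
        (ModuleCat.of A (IsLocalRing.ResidueField A))) := by
  obtain ⟨a, ha⟩ := hreg
  obtain ⟨hn, har⟩ := isFiniteLength_iff_isNoetherian_isArtinian.1 hlen
  refine TorAux.tor_induct a hdim ha (ModuleCat.of A M) (fun b hb => TorAux.pow_kill b hb) d le_rfl
    (ModuleCat.of A (IsLocalRing.ResidueField A))
    (Algebra.linearMap A (IsLocalRing.ResidueField A)) ?_ ?_
  · exact IsLocalRing.residue_surjective
  · have h1 : TorAux.II a d = IsLocalRing.maximalIdeal A := by
      rw [← ha, TorAux.II, ← Set.image_univ]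
      congr 2
      ext j
      simp
    rw [h1]
    ext x
    exact IsLocalRing.residue_eq_zero_iff x
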